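/- arXiv:1406.3062 — 2 statements merged into one kernel-verified Lean document; each statement's English description precedes it below -/
import Mathlib

section
/- Assume CH. Let I be a σ-ideal on ℝ satisfying the standing assumptions (ℝ ∉ I, translation invariance, scale invariance, Borel base, Steinhaus property). Then for every natural number n ≥ 1 there exists an I-Luzin set L ⊆ ℝ such that the n-fold Minkowski sum ⊕ⁿL = L + ⋯ + L (n summands) is an I-Luzin set and the (n+1)-fold Minkowski sum ⊕ⁿ⁺¹L equals ℝ. -/
open Cardinal MeasureTheory Set
open scoped Pointwise

/-- `I` is a σ-ideal on `ℝ`. -/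
def IsSigmaIdeal (I : Set (Set ℝ)) : Prop :=
  ∅ ∈ I ∧ (∀ A B : Set ℝ, A ⊆ B → B ∈ I → A ∈ I) ∧
    ∀ f : ℕ → Set ℝ, (∀ n, f n ∈ I) → (⋃ n, f n) ∈ I

/-- The standing assumptions on the σ-ideal `I`: nontriviality, translation and scale
invariance, Borel base and the Steinhaus property. -/
def StandingIdeal (I : Set (Set ℝ)) : Prop :=
  IsSigmaIdeal I ∧
  Set.univ ∉ I ∧
  (∀ x : ℝ, ∀ S ∈ I, (fun y => x + y) '' S ∈ I) ∧
  (∀ x : ℝ, ∀ S ∈ I, (fun y => x * y) '' S ∈ I) ∧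
  (∀ S ∈ I, ∃ B ∈ I, MeasurableSet B ∧ S ⊆ B) ∧
  (∀ A B : Set ℝ, MeasurableSet A → MeasurableSet B → A ∉ I → B ∉ I →
    (interior (A - B)).Nonempty)

/-- `L` is an `I`-Luzin set. -/
def IsLuzinFor (I : Set (Set ℝ)) (L : Set ℝ) : Prop :=
  Cardinal.mk L = Cardinal.continuum ∧ ∀ S ∈ I, (L ∩ S).Countable

/-- `L` is a strong `I`-Luzin set. -/
def IsStrongLuzinFor (I : Set (Set ℝ)) (L : Set ℝ) : Prop :=
  IsLuzinFor I L ∧ ∀ B : Set ℝ, MeasurableSet B → B ∉ I → ¬ (L ∩ B).Countable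

/-- `L` is a Luzin set. -/
def IsLuzin (L : Set ℝ) : Prop :=
  Cardinal.mk L = Cardinal.continuum ∧ ∀ M : Set ℝ, IsMeagre M → (L ∩ M).Countable

/-- `L` is a strong Luzin set. -/
def IsStrongLuzin (L : Set ℝ) : Prop :=
  IsLuzin L ∧ ∀ B : Set ℝ, MeasurableSet B → ¬ IsMeagre B → ¬ (L ∩ B).Countable

/-- `S` is a Sierpiński set. -/
def IsSierpinski (S : Set ℝ) : Prop :=
  Cardinal.mk S = Cardinal.continuum ∧ ∀ N : Set ℝ, volume N = 0 → (S ∩ N).Countable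

/-- `S` is a strong Sierpiński set. -/
def IsStrongSierpinski (S : Set ℝ) : Prop :=
  IsSierpinski S ∧ ∀ B : Set ℝ, MeasurableSet B → 0 < volume B → ¬ (S ∩ B).Countable

/-- `X` is a Bernstein set. -/
def IsBernstein (X : Set ℝ) : Prop :=
  ∀ P : Set ℝ, Perfect P → P.Nonempty → (P ∩ X).Nonempty ∧ (P ∩ Xᶜ).Nonempty

/-- `A ⊆ ℝ²` is completely `𝓜`-nonmeasurable. -/
def CompletelyMeagerNonmeasurable (A : Set (ℝ × ℝ)) : Prop :=
  ∀ B : Set (ℝ × ℝ), MeasurableSet B → ¬ IsMeagre B → (A ∩ B).Nonempty ∧ ¬ B ⊆ A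

/-- `A ⊆ ℝ²` is completely `𝓝`-nonmeasurable. -/
def CompletelyNullNonmeasurable (A : Set (ℝ × ℝ)) : Prop :=
  ∀ B : Set (ℝ × ℝ), MeasurableSet B → 0 < volume B → (A ∩ B).Nonempty ∧ ¬ B ⊆ A

/-- `n`-fold Minkowski sum (with `nFoldSum A 0 = {0}`). -/
def nFoldSum (A : Set ℝ) : ℕ → Set ℝ
  | 0 => {0}
  | n + 1 => nFoldSum A n + A

lemma StandingIdeal.iUnion_mem {I : Set (Set ℝ)} (hI : StandingIdeal I) {ι : Type} [Countable ι]
    (f : ι → Set ℝ) (hf : ∀ i, f i ∈ I) : (⋃ i, f i) ∈ I := by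
  obtain ⟨⟨h0, hsub, hU⟩, -⟩ := hI
  rcases isEmpty_or_nonempty ι with h | h
  · simpa using h0
  · obtain ⟨e, he⟩ := exists_surjective_nat ι
    rw [← he.iUnion_comp]
    exact hU _ (fun n => hf _)

lemma StandingIdeal.preimage_mem {I : Set (Set ℝ)} (hI : StandingIdeal I) (S : Set ℝ) (hS : S ∈ I)
    (a c : ℝ) (ha : a ≠ 0) : {y | a * y + c ∈ S} ∈ I := by
  obtain ⟨⟨h0, hsub, hU⟩, -, ht, hs, -⟩ := hI
  refine hsub _ _ ?_ (hs a⁻¹ _ (ht (-c) S hS))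
  intro y hy
  refine ⟨a * y, ⟨a * y + c, hy, by simp⟩, by simp [ha]⟩

lemma exists_indep {I : Set (Set ℝ)} (hI : StandingIdeal I) (S : Set ℝ) (hS : S ∈ I) (n : ℕ) :
    ∃ l : Fin n → ℝ, ∀ k : Fin n → ℤ, k ≠ 0 → ∑ i, (k i : ℝ) * l i ∉ S := by
  induction n with
  | zero => exact ⟨fun _ => 0, fun k hk => absurd (Subsingleton.elim _ _) hk⟩
  | succ n ih =>
    obtain ⟨l, hl⟩ := ih
    have h : (⋃ p : {a : ℤ // a ≠ 0} × (Fin n → ℤ),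
        {y : ℝ | ((p.1 : ℤ) : ℝ) * y + ∑ i, (p.2 i : ℝ) * l i ∈ S}) ∈ I := by
      apply hI.iUnion_mem
      rintro ⟨⟨a, ha⟩, k⟩
      exact hI.preimage_mem S hS _ _ (by exact_mod_cast ha)
    obtain ⟨y, hy⟩ : ∃ y, y ∉ (⋃ p : {a : ℤ // a ≠ 0} × (Fin n → ℤ),
        {y : ℝ | ((p.1 : ℤ) : ℝ) * y + ∑ i, (p.2 i : ℝ) * l i ∈ S}) := by
      by_contra! hc
      exact hI.2.1 (by rwa [Set.eq_univ_of_forall hc] at h)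
    refine ⟨Fin.snoc l y, fun k hk => ?_⟩
    rw [Fin.sum_univ_castSucc]
    simp only [Fin.snoc_castSucc, Fin.snoc_last]
    by_cases h0 : k (Fin.last n) = 0
    · simp only [h0, Int.cast_zero, zero_mul, add_zero]
      apply hl (fun i => k i.castSucc)
      intro hk0
      apply hk
      funext i
      refine Fin.lastCases h0 (fun i => congrFun hk0 i) i
    · intro hmem
      apply hy
      refine Set.mem_iUnion.2 ⟨⟨⟨k (Fin.last n), h0⟩, fun i => k i.castSucc⟩, ?_⟩
      simpa [add_comm] using hmem

lemma nFoldSum_decomp (C : Set ℝ) (N : ℕ) (l : Fin N → ℝ) (k : ℕ) :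
    ∀ z ∈ nFoldSum (C ∪ range l) k, ∃ (j : ℕ) (m : Fin N → ℕ) (c : ℝ),
      c ∈ nFoldSum C j ∧ j + ∑ i, m i = k ∧ z = c + ∑ i, (m i : ℝ) * l i := by
  induction k with
  | zero =>
    intro z hz
    exact ⟨0, 0, z, hz, by simp, by simp⟩
  | succ k ih =>
    rintro z ⟨u, hu, v, hv, rfl⟩
    obtain ⟨j, m, c, hc, hj, rfl⟩ := ih u hu
    rcases hv with hv | ⟨i, rfl⟩
    · exact ⟨j + 1, m, c + v, Set.add_mem_add hc hv, by omega, by ring⟩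
    · refine ⟨j, m + Pi.single i 1, c, hc, ?_, ?_⟩
      · simp [Finset.sum_add_distrib, ← hj, add_assoc]
      · simp [Finset.sum_add_distrib, add_mul, add_assoc, Pi.single_apply]

lemma nFoldSum_mono {A B : Set ℝ} (h : A ⊆ B) (n : ℕ) : nFoldSum A n ⊆ nFoldSum B n := by
  induction n with
  | zero => exact subset_rfl
  | succ n ih => exact Set.add_subset_add ih h

lemma nFoldSum_countable {A : Set ℝ} (h : A.Countable) (n : ℕ) : (nFoldSum A n).Countable := by
  induction n with
  | zero => exact Set.countable_singleton _
  | succ n ih => exact Set.Countable.image2 ih h _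

lemma sum_mem_nFoldSum {A : Set ℝ} (n : ℕ) (l : Fin n → ℝ) (hl : ∀ i, l i ∈ A) :
    ∑ i, l i ∈ nFoldSum A n := by
  induction n with
  | zero => simp [nFoldSum]
  | succ n ih =>
    rw [Fin.sum_univ_castSucc]
    exact Set.add_mem_add (ih _ fun i => hl _) (hl _)

lemma luzin_step {I : Set (Set ℝ)} (hI : StandingIdeal I) (n : ℕ) (C : Set ℝ) (hC : C.Countable)
    (S : Set ℝ) (hS : S ∈ I) (x : ℝ) :
    ∃ D : Set ℝ, D.Countable ∧ x ∈ nFoldSum D (n + 1) ∧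
      ∀ z ∈ nFoldSum (C ∪ D) n, z ∈ S → z ∈ nFoldSum C n := by
  have hT : (⋃ j, nFoldSum C j).Countable := Set.countable_iUnion (nFoldSum_countable hC)
  have := hT.to_subtype
  have h : (⋃ p : (⋃ j, nFoldSum C j) × ℕ, {y : ℝ | 1 * y + ((p.1 : ℝ) + p.2 * x) ∈ S}) ∈ I :=
    hI.iUnion_mem _ fun p => hI.preimage_mem S hS _ _ one_ne_zero
  obtain ⟨l, hl⟩ := exists_indep hI _ h n
  let l' : Fin (n + 1) → ℝ := Fin.snoc l (x - ∑ i, l i)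
  refine ⟨range l', Set.countable_range _, ?_, ?_⟩
  · have : x = ∑ i, l' i := by
      rw [Fin.sum_univ_castSucc]; simp [l']
    rw [this]
    exact sum_mem_nFoldSum _ _ fun i => Set.mem_range_self i
  · intro z hz hzS
    obtain ⟨j, m, c, hc, hj, rfl⟩ := nFoldSum_decomp C _ l' n z hz
    by_cases hm : (fun i : Fin n => ((m i.castSucc : ℤ) - m (Fin.last n))) = 0
    · have hm' : ∀ i, m i = m (Fin.last n) := by
        intro i
        refine Fin.lastCases rfl (fun i => ?_) i
        have := congrFun hm i
        simp only [Pi.zero_apply] at this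
        omega
      have hsum : ∑ i, m i = (n + 1) * m (Fin.last n) := by
        rw [Finset.sum_congr rfl fun i _ => hm' i]; simp
      have h0 : m (Fin.last n) = 0 := by
        by_contra h0
        have : (n + 1) * 1 ≤ (n + 1) * m (Fin.last n) := Nat.mul_le_mul_left _ (by omega)
        omega
      have hjn : j = n := by rw [hsum, h0] at hj; simpa using hj
      subst hjn
      simpa [hm', h0] using hc
    · exfalso
      apply hl _ hm
      refine Set.mem_iUnion.2 ⟨⟨⟨c, Set.mem_iUnion.2 ⟨j, hc⟩⟩, m (Fin.last n)⟩, ?_⟩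
      simp only [Set.mem_ofPred_eq]
      convert hzS using 1
      rw [Fin.sum_univ_castSucc]
      simp only [l', Fin.snoc_castSucc, Fin.snoc_last]
      push_cast
      simp only [sub_mul, Finset.sum_sub_distrib, ← Finset.mul_sum]
      ring

lemma nFoldSum_directed {ι : Type} [Nonempty ι] (V : ι → Set ℝ) (hV : Directed (· ⊆ ·) V) (n : ℕ) :
    ∀ z ∈ nFoldSum (⋃ i, V i) n, ∃ i, z ∈ nFoldSum (V i) n := by
  induction n with
  | zero => intro z hz; exact ⟨Classical.arbitrary _, hz⟩
  | succ n ih =>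
    rintro z ⟨u, hu, v, hv, rfl⟩
    obtain ⟨i, hi⟩ := ih u hu
    obtain ⟨j, hj⟩ := Set.mem_iUnion.1 hv
    obtain ⟨k, hik, hjk⟩ := hV i j
    exact ⟨k, Set.add_mem_add (nFoldSum_mono hik _ hi) (hjk hj)⟩

lemma exists_order (hCH : Cardinal.continuum.{0} = Cardinal.aleph.{0} 1) :
    ∃ r : ℝ → ℝ → Prop, IsWellOrder ℝ r ∧ ∀ x, {y | r y x}.Countable := by
  obtain ⟨r, hr, h⟩ := Cardinal.exists_ord_eq ℝ
  refine ⟨r, hr, fun x => ?_⟩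
  have h1 : (Ordinal.typein r x).card < #ℝ := by
    rw [← Cardinal.lt_ord, h]; exact Ordinal.typein_lt_type r x
  rw [Cardinal.mk_real, hCH] at h1
  rw [← Cardinal.le_aleph0_iff_set_countable]
  have h2 : #{y | r y x} < ℵ_ 1 := h1
  rwa [← Order.lt_succ_iff, Cardinal.succ_aleph0]

theorem stmt_13 (hCH : Cardinal.continuum = Cardinal.aleph 1)
    (I : Set (Set ℝ)) (hI : StandingIdeal I) :
    ∀ n : ℕ, 1 ≤ n → ∃ L : Set ℝ, IsLuzinFor I L ∧
      IsLuzinFor I (nFoldSum L n) ∧ nFoldSum L (n + 1) = Set.univ := by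
  intro n hn
  replace hCH : Cardinal.continuum.{0} = Cardinal.aleph.{0} 1 := by
    apply Cardinal.lift_injective.{_, 0}
    rw [Cardinal.lift_continuum, Cardinal.lift_aleph, Ordinal.lift_one]
    exact hCH
  obtain ⟨r, hr, hcount⟩ := exists_order hCH
  obtain ⟨B, hBI, hB⟩ : ∃ B : ℝ → Set ℝ, (∀ x, B x ∈ I) ∧ ∀ S ∈ I, ∃ x, S ⊆ B x := by
    let M := {s : Set ℝ // MeasurableSet s ∧ s ∈ I}
    have hM : #M ≤ #ℝ := by
      rw [Cardinal.mk_real]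
      obtain ⟨b, hb, hbm⟩ := MeasurableSpace.CountablyGenerated.isCountablyGenerated (α := ℝ)
      have h1 : #b ≤ 𝔠 :=
        (Cardinal.le_aleph0_iff_set_countable.2 hb).trans Cardinal.aleph0_le_continuum
      have h2 := MeasurableSpace.cardinal_measurableSet_le_continuum h1
      rw [← hbm] at h2
      exact (Cardinal.mk_le_mk_of_subset (s := {s : Set ℝ | MeasurableSet s ∧ s ∈ I})
        (t := {t : Set ℝ | MeasurableSet t}) fun s hs => hs.1).trans h2
    have : Nonempty M := ⟨⟨∅, MeasurableSet.empty, hI.1.1⟩⟩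
    obtain ⟨⟨e, he⟩⟩ : Nonempty (M ↪ ℝ) := hM
    refine ⟨fun x => (Function.invFun e x).1, fun x => (Function.invFun e x).2.2, fun S hS => ?_⟩
    obtain ⟨T, hT, hTm, hST⟩ := hI.2.2.2.2.1 S hS
    refine ⟨e ⟨T, hTm, hT⟩, ?_⟩
    simp only [Function.leftInverse_invFun he _]
    exact hST
  have hwf : WellFounded r := hr.wf
  have hstep : ∀ (C : Set ℝ) (x : ℝ), ∃ D : Set ℝ, C.Countable → (D.Countable ∧
      x ∈ nFoldSum D (n + 1) ∧ ∀ z ∈ nFoldSum (C ∪ D) n, (∃ y, r y x ∧ z ∈ B y) →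
        z ∈ nFoldSum C n) := by
    intro C x
    by_cases hC : C.Countable
    · have := (hcount x).to_subtype
      obtain ⟨D, h1, h2, h3⟩ := luzin_step hI n C hC (⋃ y : {y | r y x}, B y)
        (hI.iUnion_mem _ fun y => hBI _) x
      refine ⟨D, fun _ => ⟨h1, h2, fun z hz ⟨y, hy, hzy⟩ => h3 z hz ?_⟩⟩
      exact Set.mem_iUnion.2 ⟨⟨y, hy⟩, hzy⟩
    · exact ⟨∅, fun h => absurd h hC⟩
  choose F hF using hstep
  let P : ℝ → Set ℝ := hwf.fix fun x ih => F (⋃ y : {y | r y x}, ih y.1 y.2) x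
  have hP : ∀ x, P x = F (⋃ y : {y | r y x}, P y) x := fun x => hwf.fix_eq _ x
  have hPc : ∀ x, (P x).Countable := by
    intro x
    induction x using hwf.induction with
    | _ x ih =>
      rw [hP]
      have := (hcount x).to_subtype
      exact (hF _ x (Set.countable_iUnion fun y : {y | r y x} => ih y.1 y.2)).1
  have hUc : ∀ x, (⋃ y : {y | r y x}, P y).Countable := fun x => by
    have := (hcount x).to_subtype
    exact Set.countable_iUnion fun y => hPc _
  have hPx : ∀ x, x ∈ nFoldSum (P x) (n + 1) := fun x => by
    have := (hF _ x (hUc x)).2.1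
    rwa [← hP] at this
  have hPz : ∀ x, ∀ z ∈ nFoldSum ((⋃ y : {y | r y x}, P y) ∪ P x) n, (∃ y, r y x ∧ z ∈ B y) →
        z ∈ nFoldSum (⋃ y : {y | r y x}, P y) n := fun x => by
    have := (hF _ x (hUc x)).2.2
    rwa [← hP] at this
  let V : ℝ → Set ℝ := fun x => (⋃ y : {y | r y x}, P y) ∪ P x
  have hVc : ∀ x, (V x).Countable := fun x => (hUc x).union (hPc x)
  have hPV : ∀ x, P x ⊆ V x := fun x => Set.subset_union_right
  have hVm : ∀ x y, r x y → V x ⊆ V y := by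
    intro x y hxy z hz
    left
    rcases hz with hz | hz
    · obtain ⟨⟨w, hw⟩, hz⟩ := Set.mem_iUnion.1 hz
      exact Set.mem_iUnion.2 ⟨⟨w, _root_.trans hw hxy⟩, hz⟩
    · exact Set.mem_iUnion.2 ⟨⟨x, hxy⟩, hz⟩
  have hdir : ∀ x y, (V x ⊆ V y) ∨ (V y ⊆ V x) := by
    intro x y
    rcases trichotomous_of r x y with h | h | h
    · exact Or.inl (hVm _ _ h)
    · subst h; exact Or.inl subset_rfl
    · exact Or.inr (hVm _ _ h)
  have hdirected : ∀ {ι : Type} (f : ι → ℝ), Directed (· ⊆ ·) (fun i => V (f i)) := by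
    intro ι f i j
    rcases hdir (f i) (f j) with h | h
    · exact ⟨j, h, subset_rfl⟩
    · exact ⟨i, subset_rfl, h⟩
  let L : Set ℝ := ⋃ x, V x
  have hfull : nFoldSum L (n + 1) = Set.univ := by
    refine Set.eq_univ_of_forall fun x => ?_
    exact nFoldSum_mono ((hPV x).trans (Set.subset_iUnion V x)) _ (hPx x)
  have hLn : ∀ S ∈ I, (nFoldSum L n ∩ S).Countable := by
    intro S hS
    obtain ⟨b, hb⟩ := hB S hS
    refine (nFoldSum_countable (hVc b) n).mono ?_
    rintro z ⟨hz, hzS⟩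
    have hzB := hb hzS
    obtain ⟨a, ha⟩ := nFoldSum_directed V (hdirected id) n z hz
    induction a using hwf.induction with
    | _ a ih =>
      rcases trichotomous_of r a b with h | h | h
      · exact nFoldSum_mono (hVm _ _ h) _ ha
      · subst h; exact ha
      · have h1 := hPz a z ha ⟨b, h, hzB⟩
        have : Nonempty {y | r y a} := ⟨⟨b, h⟩⟩
        have h2 := nFoldSum_mono (Set.iUnion_mono fun y : {y | r y a} => hPV y) n h1
        obtain ⟨⟨w, hw⟩, h3⟩ := nFoldSum_directed (fun y : {y | r y a} => V y)
          (hdirected fun y : {y | r y a} => (y : ℝ)) n z h2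
        exact ih w hw h3
  have hLunc : ¬ L.Countable := fun h => by
    have := nFoldSum_countable h (n + 1)
    rw [hfull] at this
    exact Cardinal.not_countable_real this
  obtain ⟨l0, hl0⟩ : L.Nonempty := by
    by_contra h
    rw [Set.not_nonempty_iff_eq_empty] at h
    exact hLunc (by rw [h]; exact Set.countable_empty)
  obtain ⟨c, hc⟩ : ∃ c : ℝ, ∀ x ∈ L, c + x ∈ nFoldSum L n := by
    obtain ⟨k, rfl⟩ : ∃ k, n = k + 1 := ⟨n - 1, by omega⟩
    exact ⟨∑ i : Fin k, l0, fun x hx =>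
      Set.add_mem_add (sum_mem_nFoldSum k (fun _ => l0) fun _ => hl0) hx⟩
  have hcard : ∀ A : Set ℝ, ¬ A.Countable → #A = Cardinal.continuum := by
    intro A hA
    apply le_antisymm
    · rw [← Cardinal.mk_real]; exact Cardinal.mk_set_le A
    · rw [hCH, ← Cardinal.succ_aleph0, Order.succ_le_iff, ← not_le,
        Cardinal.le_aleph0_iff_set_countable]
      exact hA
  refine ⟨L, ⟨hcard _ hLunc, fun S hS => ?_⟩, ⟨hcard _ fun h => hLunc ?_, hLn⟩, hfull⟩
  · have h1 := hLn _ (hI.2.2.1 c S hS)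
    refine Set.MapsTo.countable_of_injOn (f := fun x => c + x) ?_ (add_right_injective c).injOn h1
    rintro x ⟨hx, hxS⟩
    exact ⟨hc x hx, x, hxS, rfl⟩
  · exact Set.MapsTo.countable_of_injOn (f := fun x => c + x) hc (add_right_injective c).injOn h
end

section
/- Assume CH. Let I be a σ-ideal on ℝ satisfying the standing assumptions (ℝ ∉ I, translation invariance, scale invariance, Borel base, Steinhaus property). Then there exists an I-Luzin set L ⊆ ℝ such that the ℚ-linear span of L (the set of all finite linear combinations of elements of L with rational coefficients, viewed as a subset of ℝ) is an I-Luzin set. -/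
open Cardinal MeasureTheory Set
open scoped Pointwise

theorem aux_span_countable (C : Set ℝ) (hC : C.Countable) :
    ((Submodule.span ℚ C : Submodule ℚ ℝ) : Set ℝ).Countable := by
  have := hC.to_subtype
  have h : Submodule.span ℚ C =
      LinearMap.range (Finsupp.linearCombination ℚ (Subtype.val : C → ℝ)) := by
    rw [Finsupp.range_linearCombination, Subtype.range_coe]
  rw [h, LinearMap.coe_range]
  exact Set.countable_range _

theorem aux_borel_card : #{t : Set ℝ | MeasurableSet t} ≤ 𝔠 := by
  have h := (TopologicalSpace.isBasis_countableBasis ℝ).borel_eq_generateFrom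
  have h2 : (inferInstance : MeasurableSpace ℝ) = borel ℝ := BorelSpace.measurable_eq
  have h3 := MeasurableSpace.cardinal_measurableSet_le_continuum
    (s := TopologicalSpace.countableBasis ℝ)
    (((TopologicalSpace.countable_countableBasis ℝ).le_aleph0).trans aleph0_le_continuum)
  rw [← h, ← h2] at h3
  exact h3

theorem aux_iUnion {I : Set (Set ℝ)} (hI : IsSigmaIdeal I) {ι : Type*} [Countable ι]
    (f : ι → Set ℝ) (hf : ∀ i, f i ∈ I) : (⋃ i, f i) ∈ I := by
  rcases isEmpty_or_nonempty ι with h | h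
  · rw [iUnion_of_empty]; exact hI.1
  · obtain ⟨g, hg⟩ := exists_surjective_nat ι
    rw [← hg.iUnion_comp]
    exact hI.2.2 _ fun n => hf _

theorem aux_countable {I : Set (Set ℝ)} (hI : StandingIdeal I) (C : Set ℝ) (hC : C.Countable) :
    C ∈ I := by
  obtain ⟨h1, h2, h3, h4, h5, h6⟩ := hI
  have h0 : ({0} : Set ℝ) ∈ I := by
    by_contra h
    have := h6 {0} {0} (measurableSet_singleton _) (measurableSet_singleton _) h h
    simp at this
  have hs : ∀ x : ℝ, ({x} : Set ℝ) ∈ I := fun x => by simpa using h3 x _ h0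
  have := hC.to_subtype
  have := aux_iUnion h1 (fun c : C => ({(c : ℝ)} : Set ℝ)) (fun c => hs _)
  simpa using this

theorem aux_pick {I : Set (Set ℝ)} (hI : StandingIdeal I) {ι : Type*} (B : ι → Set ℝ)
    (hB : ∀ i, B i ∈ I) (J : Set ι) (hJ : J.Countable) (C : Set ℝ) (hC : C.Countable) :
    ∃ x : ℝ, x ∉ Submodule.span ℚ C ∧ ∀ b ∈ J, ∀ q : ℚ, q ≠ 0 →
      ∀ y ∈ Submodule.span ℚ C, q • x + y ∉ B b := by
  have hsC := aux_span_countable C hC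
  have hsI := aux_countable hI _ hsC
  obtain ⟨h1, h2, h3, h4, h5, h6⟩ := hI
  have := hJ.to_subtype
  have : Countable (Submodule.span ℚ C) := hsC.to_subtype
  have key := aux_iUnion h1 (fun p : J × ℚ × (Submodule.span ℚ C) =>
    (fun z : ℝ => ((p.2.1 : ℝ))⁻¹ * z) '' ((fun z : ℝ => (-(p.2.2 : ℝ)) + z) '' (B p.1)))
    (fun p => h4 _ _ (h3 _ _ (hB _)))
  have key2 := aux_iUnion h1 (fun b : Bool => if b then _ else _)
    (fun b => by
      cases b
      · exact key
      · exact hsI)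
  by_contra hcon
  push Not at hcon
  apply h2
  refine h1.2.1 _ _ ?_ key2
  intro x _
  by_cases hx : x ∈ Submodule.span ℚ C
  · exact mem_iUnion.2 ⟨true, hx⟩
  · obtain ⟨b, hb, q, hq, y, hy, hm⟩ := hcon x hx
    refine mem_iUnion.2 ⟨false, mem_iUnion.2 ⟨(⟨b, hb⟩, q, ⟨y, hy⟩), ?_⟩⟩
    refine ⟨q * x, ⟨q • x + y, hm, ?_⟩, ?_⟩
    · simp [Rat.smul_def]
    · have : (q : ℝ) ≠ 0 := by exact_mod_cast hq
      simp [this]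

theorem aux_seq {I : Set (Set ℝ)} (hI : StandingIdeal I) {ι : Type*} [LinearOrder ι]
    [WellFoundedLT ι] (hc : ∀ a : ι, (Iio a).Countable) (B : ι → Set ℝ)
    (hB : ∀ i, B i ∈ I) :
    ∃ x : ι → ℝ, ∀ a, x a ∉ Submodule.span ℚ (x '' Iio a) ∧ ∀ b ≤ a, ∀ q : ℚ, q ≠ 0 →
      ∀ y ∈ Submodule.span ℚ (x '' Iio a), q • x a + y ∉ B b := by
  have hIic : ∀ a : ι, (Iic a).Countable := fun a => by
    rw [← Iio_insert]; exact (hc a).insert a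
  have hp : ∀ (a : ι) (C : Set ℝ), ∃ x : ℝ, C.Countable → (x ∉ Submodule.span ℚ C ∧
      ∀ b ∈ Iic a, ∀ q : ℚ, q ≠ 0 → ∀ y ∈ Submodule.span ℚ C, q • x + y ∉ B b) := by
    intro a C
    by_cases hC : C.Countable
    · obtain ⟨x, hx⟩ := aux_pick hI B hB (Iic a) (hIic a) C hC
      exact ⟨x, fun _ => hx⟩
    · exact ⟨0, fun h => absurd h hC⟩
  choose pick hpick using hp
  let x : ι → ℝ := (wellFounded_lt (α := ι)).fix
    (fun a ih => pick a {y | ∃ (b : ι) (h : b < a), ih b h = y})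
  have hx : ∀ a, x a = pick a (x '' Iio a) := by
    intro a
    have := (wellFounded_lt (α := ι)).fix_eq
      (fun a (ih : ∀ b, b < a → ℝ) => pick a {y | ∃ (b : ι) (h : b < a), ih b h = y}) a
    refine this.trans ?_
    congr 1
    ext y
    simp [x]
  refine ⟨x, fun a => ?_⟩
  have h := hpick a (x '' Iio a) ((hc a).image x)
  rw [← hx a] at h
  exact h

theorem aux_span_top {ι : Type*} [LinearOrder ι] (x : ι → ℝ) (s : Set ι) (z : ℝ)
    (hz : z ∈ Submodule.span ℚ (x '' s)) :
    z = 0 ∨ ∃ b ∈ s, z ∈ Submodule.span ℚ (x '' Iic b) := by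
  induction hz using Submodule.span_induction with
  | mem z h =>
    obtain ⟨b, hb, rfl⟩ := h
    exact Or.inr ⟨b, hb, Submodule.subset_span ⟨b, le_rfl, rfl⟩⟩
  | zero => exact Or.inl rfl
  | add z w _ _ hz hw =>
    rcases hz with rfl | ⟨b, hb, hz⟩
    · simpa using hw
    · rcases hw with rfl | ⟨c, hc, hw⟩
      · right; exact ⟨b, hb, by simpa using hz⟩
      · right
        have mono : ∀ {b c : ι}, b ≤ c →
            Submodule.span ℚ (x '' Iic b) ≤ Submodule.span ℚ (x '' Iic c) := fun h =>
          Submodule.span_mono (image_mono (Iic_subset_Iic.2 h))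
        rcases le_total b c with h | h
        · exact ⟨c, hc, add_mem (mono h hz) hw⟩
        · exact ⟨b, hb, add_mem hz (mono h hw)⟩
  | smul q z _ hz =>
    rcases hz with rfl | ⟨b, hb, hz⟩
    · left; simp
    · right; exact ⟨b, hb, Submodule.smul_mem _ q hz⟩

theorem aux_top {ι : Type*} [LinearOrder ι] [WellFoundedLT ι] (x : ι → ℝ) (a : ι) :
    ∀ z ∈ Submodule.span ℚ (x '' Iic a), z = 0 ∨ ∃ b, ∃ q : ℚ, q ≠ 0 ∧
      ∃ y ∈ Submodule.span ℚ (x '' Iio b), z = q • x b + y := by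
  induction a using WellFoundedLT.induction with
  | ind a ih =>
    intro z hz
    rw [← Iio_insert, image_insert_eq, Submodule.mem_span_insert] at hz
    obtain ⟨q, y, hy, rfl⟩ := hz
    by_cases hq : q = 0
    · subst hq
      rw [zero_smul, zero_add]
      rcases aux_span_top x _ y hy with h | ⟨b, hb, h⟩
      · exact Or.inl h
      · exact ih b hb y h
    · exact Or.inr ⟨a, q, hq, y, hy, rfl⟩

theorem stmt_14 (hCH : Cardinal.continuum = Cardinal.aleph 1)
    (I : Set (Set ℝ)) (hI : StandingIdeal I) :
    ∃ L : Set ℝ, IsLuzinFor I L ∧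
      IsLuzinFor I ((Submodule.span ℚ L : Submodule ℚ ℝ) : Set ℝ) := by 
  have hCH0 : continuum.{0} = aleph.{0} 1 := by
    rw [← lift_inj, lift_continuum, lift_aleph, Ordinal.lift_one]
    exact hCH
  let ι := (continuum.{0}).ord.ToType
  have hι : #ι = 𝔠 := mk_ord_toType _
  have hc : ∀ a : ι, (Iio a).Countable := fun a => by
    rw [← le_aleph0_iff_set_countable, ← lt_aleph_one_iff, ← hCH0]
    exact mk_Iio_toType_ord_lt a
  have hle : #{t : Set ℝ | MeasurableSet t ∧ t ∈ I} ≤ #ι := by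
    rw [hι]
    exact (mk_le_mk_of_subset (fun t ht => ht.1)).trans aux_borel_card
  obtain ⟨e⟩ := hle
  have : Nonempty {t : Set ℝ | MeasurableSet t ∧ t ∈ I} :=
    ⟨⟨∅, MeasurableSet.empty, hI.1.1⟩⟩
  let B : ι → Set ℝ := fun a => (Function.invFun e a).1
  have hB : ∀ a, B a ∈ I := fun a => (Function.invFun e a).2.2
  have hBs : ∀ S ∈ I, ∃ a, S ⊆ B a := by
    intro S hS
    obtain ⟨T, hT, hTm, hST⟩ := hI.2.2.2.2.1 S hS
    obtain ⟨a, ha⟩ := Function.invFun_surjective e.injective ⟨T, hTm, hT⟩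
    exact ⟨a, by simpa [B, ha] using hST⟩
  obtain ⟨x, hx⟩ := aux_seq hI hc B hB
  have hne : ∀ a b, a < b → x a ≠ x b := fun a b h he =>
    (hx b).1 (he ▸ Submodule.subset_span ⟨a, h, rfl⟩)
  have hinj : Function.Injective x := by
    intro a b h
    by_contra hab
    rcases lt_or_gt_of_ne hab with h' | h'
    · exact hne _ _ h' h
    · exact hne _ _ h' h.symm
  have hcard : #(range x) = 𝔠 := (mk_range_eq x hinj).trans hι
  have hsub : range x ⊆ ((Submodule.span ℚ (range x) : Submodule ℚ ℝ) : Set ℝ) :=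
    Submodule.subset_span
  have hcount : ∀ S ∈ I,
      (((Submodule.span ℚ (range x) : Submodule ℚ ℝ) : Set ℝ) ∩ S).Countable := by
    intro S hS
    obtain ⟨β, hβ⟩ := hBs S hS
    refine (aux_span_countable _ ((hc β).image x)).mono ?_
    rintro z ⟨hz, hzS⟩
    have h0 : z = 0 ∨ ∃ b, ∃ q : ℚ, q ≠ 0 ∧
        ∃ y ∈ Submodule.span ℚ (x '' Iio b), z = q • x b + y := by
      rw [← image_univ] at hz
      rcases aux_span_top x _ z hz with h | ⟨b, _, h⟩
      · exact Or.inl h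
      · exact aux_top x b z h
    rcases h0 with rfl | ⟨b, q, hq, y, hy, rfl⟩
    · exact Submodule.zero_mem _
    · rcases lt_or_ge b β with h | h
      · exact add_mem (Submodule.smul_mem _ q (Submodule.subset_span ⟨b, h, rfl⟩))
          (Submodule.span_mono (image_mono (Iio_subset_Iio h.le)) hy)
      · exact absurd (hβ hzS) ((hx b).2 β h q hq y hy)
  refine ⟨range x, ⟨hcard, fun S hS => (hcount S hS).mono (inter_subset_inter_left _ hsub)⟩,
    le_antisymm ?_ ?_, hcount⟩
  · rw [← mk_real]; exact mk_set_le _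
  · rw [← hcard]; exact mk_le_mk_of_subset hsub
end
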